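/- arXiv:math/0301381 — 5 statements merged into one kernel-verified Lean document; each statement's English description precedes it below -/
import Mathlib

section
/- Let H be a real Hilbert space, F : H → H Fréchet differentiable, u₀ ∈ H, R > 0, and B := {u ∈ H : ‖u − u₀‖ ≤ R}. Let Φ : [0,∞) × H → H be continuous in t and Lipschitz in u on B, and let g₁, g₂ be positive functions on [0,∞) with g₂ continuous and g₁ locally integrable. Assume: (i) ⟨F′(u)Φ(t,u), F(u)⟩ ≤ −g₁(t)‖F(u)‖² for all u ∈ B and t ≥ 0; (ii) ‖Φ(t,u)‖ ≤ g₂(t)‖F(u)‖ for all u ∈ B and t ≥ 0; (iii) ∫₀^∞ g₁(t) dt = +∞; (iv) G(t) := g₂(t)·exp(−∫₀ᵗ g₁(s) ds) is integrable on [0,∞); (v) ‖F(u₀)‖·∫₀^∞ G(t) dt ≤ R. Then the Cauchy problem u̇(t) = Φ(t,u(t)), u(0) = u₀ has a global solution u on [0,∞) with u(t) ∈ B for all t ≥ 0; the strong limit y := lim_{t→∞} u(t) exists; F(y) = 0; and for all t ≥ 0 one has ‖u(t) − y‖ ≤ ‖F(u₀)‖·∫ₜ^∞ G(x) dx and ‖F(u(t))‖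 ≤ ‖F(u₀)‖·exp(−∫₀ᵗ g₁(x) dx). -/
open MeasureTheory Filter
open scoped RealInnerProductSpace

/-!
While the trajectory `u` stays in the ball, `d/dt ‖F(u)‖² ≤ -2 g₁ ‖F(u)‖²`, so `‖F(u(t))‖` is at
most `‖F(u₀)‖ exp(-∫₀ᵗ g₁)` and the speed `‖Φ(t, u(t))‖` is at most `‖F(u₀)‖ G(t)`. Since `G > 0`,
the length travelled by any finite time is strictly less than `R`, so the trajectory never reaches
the sphere: composing `Φ` with a Lipschitz retraction onto the ball gives a globally solvable
equation whose solution is a solution of the original one. Finite length gives the limit `y`, and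
the decay of `‖F(u(t))‖` gives `F(y) = 0`.
-/

section

open Set Metric
open scoped Topology NNReal

theorem Ici_subset_of_isOpen_of_forall_Ico_subset {α : Type*} [ConditionallyCompleteLinearOrder α]
    [TopologicalSpace α] [OrderTopology α] {s : Set α} {a : α} (hs : IsOpen s)
    (h : ∀ b ≥ a, Ico a b ⊆ s → b ∈ s) : Ici a ⊆ s := by
  intro b hb
  by_contra hbs
  obtain ⟨c, ⟨hc, hcs⟩, hmin⟩ := (isCompact_Icc.diff hs).exists_isLeast ⟨b, ⟨hb, le_rfl⟩, hbs⟩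
  refine hcs (h c hc.1 fun t ht => ?_)
  by_contra hts
  exact (hmin ⟨⟨ht.1, ht.2.le.trans hc.2⟩, hts⟩).not_gt ht.2

theorem intervalIntegral_lt_integral_Ioi {f : ℝ → ℝ} {a b : ℝ} (hab : a ≤ b)
    (hf : IntegrableOn f (Ioi a)) (hpos : ∀ t > b, 0 < f t) :
    ∫ t in a..b, f t < ∫ t in Ioi a, f t := by
  have hfb : IntegrableOn f (Ioi b) := hf.mono_set (Ioi_subset_Ioi hab)
  have htail : 0 < ∫ t in Ioi b, f t := by
    rw [setIntegral_pos_iff_support_of_nonneg_ae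
      (ae_restrict_of_forall_mem measurableSet_Ioi fun t ht => (hpos t ht).le) hfb,
      inter_eq_right.2 (show Ioi b ⊆ Function.support f from fun t ht => (hpos t ht).ne')]
    simp
  have hsplit := intervalIntegral.integral_interval_add_Ioi hf hfb
  linarith

theorem const_mul_intervalIntegral_lt_of_const_mul_integral_Ioi_le {f : ℝ → ℝ} {a b c r : ℝ}
    (hab : a ≤ b) (hf : IntegrableOn f (Ioi a)) (hpos : ∀ t > b, 0 < f t) (hc : 0 ≤ c) (hr : 0 < r)
    (hle : c * ∫ t in Ioi a, f t ≤ r) : c * ∫ t in a..b, f t < r := by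
  rcases hc.eq_or_lt with rfl | hc
  · rwa [zero_mul]
  · exact (mul_lt_mul_of_pos_left (intervalIntegral_lt_integral_Ioi hab hf hpos) hc).trans_le hle

theorem abs_div_max_sub_div_max_mul_le {a b r : ℝ} (hr : 0 < r) (hb : 0 ≤ b) :
    |r / max r a - r / max r b| * b ≤ |a - b| := by
  set p := max r a
  set q := max r b
  have hp : 0 < p := lt_max_of_lt_left hr
  have hq : 0 < q := lt_max_of_lt_left hr
  calc |r / p - r / q| * b = r / p * (b / q) * |q - p| := by
        rw [show r / p - r / q = r / (p * q) * (q - p) by field_simp, abs_mul,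
          abs_of_pos (by positivity)]
        field_simp
    _ ≤ 1 * |q - p| := by
        gcongr
        exact mul_le_one₀ (div_le_one_of_le₀ (le_max_left _ _) hp.le) (by positivity)
          (div_le_one_of_le₀ (le_max_right _ _) hq.le)
    _ ≤ |a - b| := by
        rw [one_mul, abs_sub_comm a b]
        simpa only [q, p, max_comm r] using abs_max_sub_max_le_abs b a r

theorem le_mul_exp_integral_of_deriv_right_le_of_pos {f f' g : ℝ → ℝ} {a b : ℝ} (hab : a ≤ b)
    (hf : ContinuousOn f (Icc a b))
    (hf' : ∀ t ∈ Ioo a b, HasDerivWithinAt f (f' t) (Ioi t) t)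
    (hle : ∀ t ∈ Ioo a b, f' t ≤ g t * f t) (hg : IntegrableOn g (Icc a b))
    (hpos : ∀ t ∈ Icc a b, 0 < f t) :
    f b ≤ f a * Real.exp (∫ t in a..b, g t) := by
  have hfa : 0 < f a := hpos a (left_mem_Icc.2 hab)
  have hfb : 0 < f b := hpos b (right_mem_Icc.2 hab)
  -- `g` is merely integrable, so `exp (-∫ g)` may fail to be differentiable; `log f` avoids it.
  have hlog : Real.log (f b) - Real.log (f a) ≤ ∫ t in a..b, g t :=
    intervalIntegral.sub_le_integral_of_hasDeriv_right_of_le hab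
      (hf.log fun t ht => (hpos t ht).ne')
      (fun t ht => (hf' t ht).log (hpos t (Ioo_subset_Icc_self ht)).ne') hg
      (fun t ht => (div_le_iff₀ (hpos t (Ioo_subset_Icc_self ht))).2 (hle t ht))
  calc f b = Real.exp (Real.log (f b)) := (Real.exp_log hfb).symm
    _ ≤ Real.exp (Real.log (f a) + ∫ t in a..b, g t) := Real.exp_le_exp.2 (by linarith)
    _ = f a * Real.exp (∫ t in a..b, g t) := by rw [Real.exp_add, Real.exp_log hfa]

theorem pos_of_deriv_right_le_of_pos_right {f f' g : ℝ → ℝ} {a b : ℝ}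
    (hf : ContinuousOn f (Icc a b))
    (hf' : ∀ t ∈ Ioo a b, HasDerivWithinAt f (f' t) (Ioi t) t)
    (hle : ∀ t ∈ Ioo a b, f' t ≤ g t * f t) (hg : IntegrableOn g (Icc a b)) (hfb : 0 < f b) :
    ∀ t ∈ Icc a b, 0 < f t := by
  by_contra! hne
  -- At the last point `c` where `f ≤ 0`, the bound for `f b` in terms of `f r`, `r > c`, passes to
  -- the limit and contradicts `0 < f b`.
  obtain ⟨c, ⟨hc, hfc⟩, hmax⟩ :=
    (isCompact_Icc.of_isClosed_subset (hf.preimage_isClosed_of_isClosed isClosed_Icc isClosed_Iic)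
      inter_subset_left).exists_isGreatest (show (Icc a b ∩ f ⁻¹' Iic 0).Nonempty from hne)
  have hcb : c < b := hc.2.lt_of_ne (by rintro rfl; exact hfb.not_ge hfc)
  have hbound : ∀ r ∈ Ioc c b, f b ≤ f r * Real.exp (∫ t in r..b, g t) := by
    intro r hr
    have har : a ≤ r := hc.1.trans hr.1.le
    refine le_mul_exp_integral_of_deriv_right_le_of_pos hr.2 (hf.mono (Icc_subset_Icc_left har))
      (fun t ht => hf' t (Ioo_subset_Ioo_left har ht))
      (fun t ht => hle t (Ioo_subset_Ioo_left har ht)) (hg.mono_set (Icc_subset_Icc_left har))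
      fun t ht => ?_
    by_contra! hft
    exact (hr.1.trans_le ht.1).not_ge (hmax ⟨Icc_subset_Icc_left har ht, hft⟩)
  have hcont : ContinuousOn (fun r => f r * Real.exp (∫ t in r..b, g t)) (Icc a b) := by
    have hab : a ≤ b := hc.1.trans hc.2
    rw [← uIcc_of_le hab] at hf hg ⊢
    exact hf.mul (intervalIntegral.continuousOn_primitive_interval_left hg).rexp
  have hlim : Tendsto (fun r => f r * Real.exp (∫ t in r..b, g t)) (𝓝[>] c)
      (𝓝 (f c * Real.exp (∫ t in c..b, g t))) := by
    rw [← nhdsWithin_Ioc_eq_nhdsGT hcb]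
    exact (hcont c hc).mono fun t ht => ⟨hc.1.trans ht.1.le, ht.2⟩
  have hfb_le : f b ≤ f c * Real.exp (∫ t in c..b, g t) :=
    ge_of_tendsto hlim (eventually_of_mem (Ioc_mem_nhdsGT hcb) hbound)
  exact hfb.not_ge (hfb_le.trans (mul_nonpos_of_nonpos_of_nonneg hfc (Real.exp_pos _).le))

theorem le_mul_exp_integral_of_deriv_right_le {f f' g : ℝ → ℝ} {a b : ℝ} (hab : a ≤ b)
    (hf : ContinuousOn f (Icc a b))
    (hf' : ∀ t ∈ Ioo a b, HasDerivWithinAt f (f' t) (Ioi t) t)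
    (hle : ∀ t ∈ Ioo a b, f' t ≤ g t * f t) (hg : IntegrableOn g (Icc a b)) (hfa : 0 ≤ f a) :
    f b ≤ f a * Real.exp (∫ t in a..b, g t) := by
  rcases le_or_gt (f b) 0 with hfb | hfb
  · exact hfb.trans (by positivity)
  · exact le_mul_exp_integral_of_deriv_right_le_of_pos hab hf hf' hle hg
      (pos_of_deriv_right_le_of_pos_right hf hf' hle hg hfb)

theorem norm_le_mul_exp_integral_of_inner_le {E : Type*} [NormedAddCommGroup E]
    [InnerProductSpace ℝ E] {w w' : ℝ → E} {g : ℝ → ℝ} {a b : ℝ} (hab : a ≤ b)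
    (hw : ContinuousOn w (Icc a b))
    (hw' : ∀ t ∈ Ioo a b, HasDerivWithinAt w (w' t) (Ioi t) t)
    (hle : ∀ t ∈ Ioo a b, ⟪w' t, w t⟫ ≤ g t * ‖w t‖ ^ 2) (hg : IntegrableOn g (Icc a b)) :
    ‖w b‖ ≤ ‖w a‖ * Real.exp (∫ t in a..b, g t) := by
  have hsq : ‖w b‖ ^ 2 ≤ ‖w a‖ ^ 2 * Real.exp (∫ t in a..b, 2 * g t) :=
    le_mul_exp_integral_of_deriv_right_le (f := fun t => ‖w t‖ ^ 2) (g := fun t => 2 * g t) hab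
      (hw.norm.pow 2) (fun t ht => (hw' t ht).norm_sq)
      (fun t ht => by rw [real_inner_comm]; linarith [hle t ht]) (hg.const_mul 2) (sq_nonneg _)
  refine le_of_sq_le_sq (hsq.trans_eq ?_) (by positivity)
  rw [intervalIntegral.integral_const_mul, two_mul, Real.exp_add]
  ring

section Curves

variable {E : Type*} [NormedAddCommGroup E] [NormedSpace ℝ E]

theorem norm_comp_le_mul_exp_integral_of_inner_le {V : Type*} [NormedAddCommGroup V]
    [InnerProductSpace ℝ V] {F : E → V} {F' : E → E →L[ℝ] V} {s : Set E}
    (hF : ∀ x ∈ s, HasFDerivWithinAt F (F' x) s x) {u u' : ℝ → E} {g : ℝ → ℝ} {a b : ℝ}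
    (hab : a ≤ b) (hu : ∀ t ∈ Icc a b, HasDerivWithinAt u (u' t) (Icc a b) t)
    (hus : MapsTo u (Icc a b) s)
    (hle : ∀ t ∈ Icc a b, ⟪F' (u t) (u' t), F (u t)⟫ ≤ g t * ‖F (u t)‖ ^ 2)
    (hg : IntegrableOn g (Icc a b)) :
    ‖F (u b)‖ ≤ ‖F (u a)‖ * Real.exp (∫ t in a..b, g t) := by
  have hFu : ∀ t ∈ Icc a b, HasDerivWithinAt (F ∘ u) (F' (u t) (u' t)) (Icc a b) t := fun t ht =>
    (hF (u t) (hus ht)).comp_hasDerivWithinAt t (hu t ht) hus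
  exact norm_le_mul_exp_integral_of_inner_le hab (fun t ht => (hFu t ht).continuousWithinAt)
    (fun t ht => ((hFu t (Ioo_subset_Icc_self ht)).hasDerivAt
      (Icc_mem_nhds ht.1 ht.2)).hasDerivWithinAt)
    (fun t ht => hle t (Ioo_subset_Icc_self ht)) hg

theorem mem_ball_of_norm_deriv_le_while_mem {u u' : ℝ → E} {γ : ℝ → ℝ} {a r : ℝ} (hu : Continuous u)
    (hu' : ∀ t ≥ a, MapsTo u (Icc a t) (closedBall (u a) r) → HasDerivAt u (u' t) t ∧ ‖u' t‖ ≤ γ t)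
    (hγ : ∀ b ≥ a, IntervalIntegrable γ volume a b) (hγr : ∀ b ≥ a, ∫ t in a..b, γ t < r) :
    ∀ t ≥ a, u t ∈ ball (u a) r := by
  refine Ici_subset_of_isOpen_of_forall_Ico_subset (isOpen_ball.preimage hu) fun b hb hball => ?_
  have hderiv : ∀ t ∈ Ioo a b, HasDerivAt u (u' t) t ∧ ‖u' t‖ ≤ γ t := fun t ht =>
    hu' t ht.1.le fun x hx => ball_subset_closedBall (hball ⟨hx.1, hx.2.trans_lt ht.2⟩)
  have hlen : ‖u b - u a‖ ≤ ∫ t in a..b, γ t :=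
    norm_sub_le_integral_of_norm_deriv_le_of_le hb hu.continuousOn
      (fun t ht => (hderiv t ht).1.differentiableAt.differentiableWithinAt)
      (Eventually.of_forall fun t ht => (hderiv t ht).1.deriv ▸ (hderiv t ht).2) (hγ b hb)
  exact mem_ball_iff_norm.2 (hlen.trans_lt (hγr b hb))

variable [CompleteSpace E]

theorem exists_tendsto_of_norm_deriv_le_integrableOn {u u' : ℝ → E} {γ : ℝ → ℝ} {a : ℝ}
    (hu : ∀ t ≥ a, HasDerivAt u (u' t) t) (hγ : IntegrableOn γ (Ioi a))
    (hle : ∀ t > a, ‖u' t‖ ≤ γ t) :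
    ∃ y, Tendsto u atTop (𝓝 y) ∧ ∀ t ≥ a, ‖u t - y‖ ≤ ∫ x in Ioi t, γ x := by
  have hle_ae : ∀ t ≥ a, ∀ᵐ x ∂volume.restrict (Ioi t), ‖u' x‖ ≤ γ x := fun t ht =>
    ae_restrict_of_forall_mem measurableSet_Ioi fun x hx => hle x (ht.trans_lt hx)
  have hmeas : AEStronglyMeasurable u' (volume.restrict (Ioi a)) :=
    (aestronglyMeasurable_deriv u _).congr
      (ae_restrict_of_forall_mem measurableSet_Ioi fun t ht => (hu t (le_of_lt ht)).deriv)
  have hint : IntegrableOn u' (Ioi a) := hγ.mono' hmeas (hle_ae a le_rfl)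
  have hlim := tendsto_limUnder_of_hasDerivAt_of_integrableOn_Ioi (fun t ht => hu t (le_of_lt ht))
    hint
  refine ⟨_, hlim, fun t ht => ?_⟩
  rw [norm_sub_rev, ← integral_Ioi_of_hasDerivAt_of_tendsto' (fun x hx => hu x (ht.trans hx))
    (hint.mono_set (Ioi_subset_Ioi ht)) hlim]
  exact norm_integral_le_of_norm_le (hγ.mono_set (Ioi_subset_Ioi ht)) (hle_ae t ht)

end Curves

section RadialRetraction

variable {E : Type*} [NormedAddCommGroup E] [NormedSpace ℝ E] {c x : E} {r : ℝ}

/-- The radial retraction of a normed space onto the closed ball of centre `c` and radius `r`: it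
fixes the ball and moves every other point along its ray from `c` to the sphere. It serves to extend
a vector field from the ball to the whole space. -/
noncomputable def radialRetraction (c : E) (r : ℝ) (x : E) : E :=
  c + (r / max r ‖x - c‖) • (x - c)

theorem radialRetraction_mem_closedBall (hr : 0 < r) (x : E) :
    radialRetraction c r x ∈ closedBall c r := by
  have hmax : 0 < max r ‖x - c‖ := lt_max_of_lt_left hr
  rw [mem_closedBall_iff_norm, radialRetraction, add_sub_cancel_left, norm_smul, Real.norm_eq_abs,
    abs_of_nonneg (by positivity), div_mul_eq_mul_div, div_le_iff₀ hmax]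
  exact mul_le_mul_of_nonneg_left (le_max_right _ _) hr.le

theorem radialRetraction_of_mem_closedBall (hr : 0 < r) (hx : x ∈ closedBall c r) :
    radialRetraction c r x = x := by
  rw [radialRetraction, max_eq_left (mem_closedBall_iff_norm.1 hx), div_self hr.ne', one_smul,
    add_sub_cancel]

theorem lipschitzWith_radialRetraction (hr : 0 < r) :
    LipschitzWith 2 (radialRetraction c r : E → E) := by
  refine LipschitzWith.of_dist_le_mul fun x y => ?_
  set p := max r ‖x - c‖
  set q := max r ‖y - c‖
  have hp : 0 < p := lt_max_of_lt_left hr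
  have hscale : |r / p - r / q| * ‖y - c‖ ≤ ‖x - y‖ := calc
    |r / p - r / q| * ‖y - c‖ ≤ |‖x - c‖ - ‖y - c‖| :=
      abs_div_max_sub_div_max_mul_le hr (norm_nonneg _)
    _ ≤ ‖x - c - (y - c)‖ := abs_norm_sub_norm_le _ _
    _ = ‖x - y‖ := by rw [sub_sub_sub_cancel_right]
  have hsplit : radialRetraction c r x - radialRetraction c r y
      = (r / p) • (x - y) + (r / p - r / q) • (y - c) := by
    simp only [radialRetraction, p, q]
    module
  calc dist (radialRetraction c r x) (radialRetraction c r y)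
      ≤ r / p * ‖x - y‖ + |r / p - r / q| * ‖y - c‖ := by
        rw [dist_eq_norm, hsplit]
        refine (norm_add_le _ _).trans_eq ?_
        rw [norm_smul, norm_smul, Real.norm_of_nonneg (by positivity), Real.norm_eq_abs]
    _ ≤ 1 * ‖x - y‖ + ‖x - y‖ := by
        gcongr
        exact div_le_one_of_le₀ (le_max_left _ _) hp.le
    _ = (2 : ℝ≥0) * dist x y := by
        rw [dist_eq_norm, NNReal.coe_ofNat]
        ring

end RadialRetraction

section GlobalExistence

variable {E : Type*} [NormedAddCommGroup E] [NormedSpace ℝ E] {v : ℝ → E → E} {K : ℝ≥0} {x₀ : E}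

theorem exists_isIntegralCurve_of_forall_isIntegralCurveOn_Ioo (hlip : ∀ t, LipschitzWith K (v t))
    (hloc : ∀ T > 0, ∃ α : ℝ → E, α 0 = x₀ ∧ IsIntegralCurveOn α v (Ioo (-T) T)) :
    ∃ u : ℝ → E, u 0 = x₀ ∧ IsIntegralCurve u v := by
  choose! α hα₀ hα using hloc
  have hderiv : ∀ T, ∀ t, |t| < T → HasDerivAt (α T) (v t (α T t)) t := fun T t ht =>
    (hα T ((abs_nonneg t).trans_lt ht) t (abs_lt.1 ht)).hasDerivAt
      (Ioo_mem_nhds (abs_lt.1 ht).1 (abs_lt.1 ht).2)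
  have hagree : ∀ S T t, |t| < S → |t| < T → α S t = α T t := by
    intro S T t hS hT
    have hm : 0 < min S T := (abs_nonneg t).trans_lt (lt_min hS hT)
    refine ODE_solution_unique_of_mem_Ioo (s := fun _ => univ) (t₀ := 0)
      (fun t _ => (hlip t).lipschitzOnWith) ⟨neg_neg_of_pos hm, hm⟩
      (fun s hs => ⟨hderiv S s ((abs_lt.2 hs).trans_le (min_le_left _ _)), mem_univ _⟩)
      (fun s hs => ⟨hderiv T s ((abs_lt.2 hs).trans_le (min_le_right _ _)), mem_univ _⟩) ?_
      (abs_lt.1 (lt_min hS hT))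
    rw [hα₀ S (hm.trans_le (min_le_left _ _)), hα₀ T (hm.trans_le (min_le_right _ _))]
  refine ⟨fun t => α (|t| + 1) t, hα₀ _ (by positivity), fun t => ?_⟩
  refine (hderiv (|t| + 1) t (lt_add_one _)).congr_of_eventuallyEq ?_
  filter_upwards [continuous_abs.continuousAt.eventually_lt_const (lt_add_one |t|)] with s hs
  exact hagree _ _ s (lt_add_one _) hs

variable [CompleteSpace E]

theorem exists_isIntegralCurve_of_lipschitzWith (hlip : ∀ t, LipschitzWith K (v t))
    (hcont : ∀ x, Continuous (v · x))
    (hbdd : ∀ T, ∃ C : ℝ≥0, ∀ t ∈ Icc (-T) T, ∀ x, ‖v t x‖ ≤ C) (x₀ : E) :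
    ∃ u : ℝ → E, u 0 = x₀ ∧ IsIntegralCurve u v := by
  refine exists_isIntegralCurve_of_forall_isIntegralCurveOn_Ioo hlip fun T hT => ?_
  obtain ⟨C, hC⟩ := hbdd T
  have hPL : IsPicardLindelof v (⟨0, by simpa using hT.le⟩ : Icc (-T) T) x₀
      (C * T.toNNReal) 0 C K :=
    { lipschitzOnWith := fun t _ => (hlip t).lipschitzOnWith
      continuousOn := fun x _ => (hcont x).continuousOn
      norm_le := fun t ht x _ => hC t ht x
      mul_max_le := by simp [hT.le] }
  obtain ⟨α, hα₀, hα⟩ := hPL.exists_eq_forall_mem_Icc_hasDerivWithinAt₀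
  exact ⟨α, hα₀, IsIntegralCurveOn.mono hα Ioo_subset_Icc_self⟩

theorem exists_hasDerivAt_while_mem_closedBall {Φ : ℝ → E → E} {r : ℝ} (hr : 0 < r)
    (hcont : ∀ x ∈ closedBall x₀ r, ContinuousOn (Φ · x) (Ici 0))
    (hlip : ∀ t ∈ Ici 0, LipschitzOnWith K (Φ t) (closedBall x₀ r)) :
    ∃ u : ℝ → E, u 0 = x₀ ∧ Continuous u ∧
      ∀ t ≥ 0, u t ∈ closedBall x₀ r → HasDerivAt u (Φ t (u t)) t := by
  let ρ := radialRetraction x₀ r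
  let v : ℝ → E → E := fun t x => Φ (max t 0) (ρ x)
  have hρ : ∀ x, ρ x ∈ closedBall x₀ r := radialRetraction_mem_closedBall hr
  have hvcont : ∀ x, Continuous (v · x) := fun x =>
    (hcont (ρ x) (hρ x)).comp_continuous (by fun_prop) fun t => le_max_right t 0
  have hvlip : ∀ t, LipschitzWith (K * 2) (v t) := fun t => by
    rw [← lipschitzOnWith_univ]
    exact (hlip _ (le_max_right t 0)).comp (lipschitzWith_radialRetraction hr).lipschitzOnWith
      fun x _ => hρ x
  have hvbdd : ∀ T, ∃ C : ℝ≥0, ∀ t ∈ Icc (-T) T, ∀ x, ‖v t x‖ ≤ C := by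
    intro T
    obtain ⟨M, hM⟩ := isCompact_Icc.exists_bound_of_continuousOn
      (hvcont x₀).continuousOn (s := Icc (-T) T)
    refine ⟨(M + K * r).toNNReal, fun t ht x => le_trans ?_ (Real.le_coe_toNNReal _)⟩
    have hx₀ : ρ x₀ = x₀ := radialRetraction_of_mem_closedBall hr (mem_closedBall_self hr.le)
    calc ‖v t x‖ ≤ ‖v t x₀‖ + dist (v t x) (v t x₀) := by
          rw [dist_eq_norm]
          exact norm_le_insert' _ _
      _ ≤ M + K * dist (ρ x) (ρ x₀) :=
          add_le_add (hM t ht) ((hlip _ (le_max_right t 0)).dist_le_mul _ (hρ x) _ (hρ x₀))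
      _ ≤ M + K * r := by
          rw [hx₀]
          gcongr
          exact hρ x
  obtain ⟨u, hu₀, hu⟩ := exists_isIntegralCurve_of_lipschitzWith hvlip hvcont hvbdd x₀
  refine ⟨u, hu₀, hu.continuous, fun t ht hut => ?_⟩
  have hv : v t (u t) = Φ t (u t) := by
    simp only [v, ρ, max_eq_left ht, radialRetraction_of_mem_closedBall hr hut]
  exact hv ▸ hu t

end GlobalExistence

section Convergence

theorem eq_zero_of_tendsto_of_norm_le_mul_exp_neg {ι X V : Type*} [TopologicalSpace X]
    [NormedAddCommGroup V] {l : Filter ι} [l.NeBot] {F : X → V} {s : Set X} {u : ι → X} {y : X}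
    {I : ι → ℝ} {C : ℝ} (hF : ContinuousOn F s) (hs : IsClosed s) (hu : Tendsto u l (𝓝 y))
    (hus : ∀ᶠ t in l, u t ∈ s) (hI : Tendsto I l atTop)
    (hle : ∀ᶠ t in l, ‖F (u t)‖ ≤ C * Real.exp (-I t)) : F y = 0 := by
  have hFy : Tendsto (F ∘ u) l (𝓝 (F y)) :=
    (hF y (hs.mem_of_tendsto hu hus)).tendsto.comp (tendsto_nhdsWithin_iff.2 ⟨hu, hus⟩)
  have hF0 : Tendsto (F ∘ u) l (𝓝 0) := by
    refine squeeze_zero_norm' hle ?_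
    simpa using (Real.tendsto_exp_neg_atTop_nhds_zero.comp hI).const_mul C
  exact tendsto_nhds_unique hFy hF0

variable {H V : Type*} [NormedAddCommGroup H] [NormedSpace ℝ H] [CompleteSpace H]
  [NormedAddCommGroup V] [InnerProductSpace ℝ V]

/-- The function `G` of the dynamical systems method: up to the factor `‖F u₀‖`, it bounds the speed
of the trajectory starting at `u₀`. -/
noncomputable def dsmMajorant (g₁ g₂ : ℝ → ℝ) (t : ℝ) : ℝ :=
  g₂ t * Real.exp (-∫ s in (0 : ℝ)..t, g₁ s)

theorem dsm_main_theorem_general (F : H → V) (F' : H → H →L[ℝ] V) (u₀ : H) (R : ℝ) (hR : 0 < R)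
    (hF : ∀ x ∈ closedBall u₀ R, HasFDerivWithinAt F (F' x) (closedBall u₀ R) x)
    (Φ : ℝ → H → H) (hΦcont : ∀ x ∈ closedBall u₀ R, ContinuousOn (Φ · x) (Ici 0))
    (L : ℝ≥0) (hΦlip : ∀ t ∈ Ici (0 : ℝ), LipschitzOnWith L (Φ t) (closedBall u₀ R))
    (g₁ g₂ : ℝ → ℝ) (hg₂pos : ∀ t ≥ 0, 0 < g₂ t)
    (hg₁loc : ∀ t ≥ 0, IntervalIntegrable g₁ volume 0 t)
    (hdescent : ∀ t ≥ 0, ∀ x ∈ closedBall u₀ R, ⟪F' x (Φ t x), F x⟫ ≤ -g₁ t * ‖F x‖ ^ 2)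
    (hspeed : ∀ t ≥ 0, ∀ x ∈ closedBall u₀ R, ‖Φ t x‖ ≤ g₂ t * ‖F x‖)
    (hg₁top : Tendsto (fun t => ∫ s in (0 : ℝ)..t, g₁ s) atTop atTop)
    (hG : IntegrableOn (dsmMajorant g₁ g₂) (Ioi 0))
    (hGR : ‖F u₀‖ * ∫ t in Ioi 0, dsmMajorant g₁ g₂ t ≤ R) :
    ∃ u : ℝ → H, u 0 = u₀ ∧
      (∀ t ≥ 0, HasDerivAt u (Φ t (u t)) t) ∧
      (∀ t ≥ 0, u t ∈ closedBall u₀ R) ∧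
      ∃ y : H, Tendsto u atTop (𝓝 y) ∧ F y = 0 ∧
        (∀ t ≥ 0, ‖u t - y‖ ≤ ‖F u₀‖ * ∫ x in Ioi t, dsmMajorant g₁ g₂ x) ∧
        (∀ t ≥ 0, ‖F (u t)‖ ≤ ‖F u₀‖ * Real.exp (-∫ x in (0 : ℝ)..t, g₁ x)) := by
  obtain ⟨u, rfl, hu, hu'⟩ := exists_hasDerivAt_while_mem_closedBall hR hΦcont hΦlip
  have hdecay : ∀ t ≥ 0, MapsTo u (Icc 0 t) (closedBall (u 0) R) →
      ‖F (u t)‖ ≤ ‖F (u 0)‖ * Real.exp (-∫ x in (0 : ℝ)..t, g₁ x) := fun t ht hmem => by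
    rw [← intervalIntegral.integral_neg]
    exact norm_comp_le_mul_exp_integral_of_inner_le hF ht
      (fun s hs => (hu' s hs.1 (hmem hs)).hasDerivWithinAt) hmem
      (fun s hs => hdescent s hs.1 _ (hmem hs))
      ((intervalIntegrable_iff_integrableOn_Icc_of_le ht).1 (hg₁loc t ht)).neg
  have hderiv : ∀ t ≥ 0, MapsTo u (Icc 0 t) (closedBall (u 0) R) →
      HasDerivAt u (Φ t (u t)) t ∧ ‖Φ t (u t)‖ ≤ ‖F (u 0)‖ * dsmMajorant g₁ g₂ t := by
    intro t ht hmem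
    have hut : u t ∈ closedBall (u 0) R := hmem (right_mem_Icc.2 ht)
    refine ⟨hu' t ht hut, (hspeed t ht _ hut).trans ?_⟩
    rw [dsmMajorant, mul_left_comm]
    exact mul_le_mul_of_nonneg_left (hdecay t ht hmem) (hg₂pos t ht).le
  have hlength : ∀ b ≥ 0, ∫ t in (0 : ℝ)..b, ‖F (u 0)‖ * dsmMajorant g₁ g₂ t < R := fun b hb => by
    rw [intervalIntegral.integral_const_mul]
    exact const_mul_intervalIntegral_lt_of_const_mul_integral_Ioi_le hb hG
      (fun t ht => mul_pos (hg₂pos t (hb.trans (le_of_lt ht))) (Real.exp_pos _)) (norm_nonneg _)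
      hR hGR
  have hint : IntegrableOn (fun t => ‖F (u 0)‖ * dsmMajorant g₁ g₂ t) (Ioi 0) := hG.const_mul _
  have hball : ∀ t ≥ 0, u t ∈ closedBall (u 0) R := fun t ht => ball_subset_closedBall <|
    mem_ball_of_norm_deriv_le_while_mem hu hderiv (fun b hb =>
      (intervalIntegrable_iff_integrableOn_Ioc_of_le hb).2 (hint.mono_set Ioc_subset_Ioi_self))
      hlength t ht
  have hmaps : ∀ t, MapsTo u (Icc 0 t) (closedBall (u 0) R) := fun t s hs => hball s hs.1
  obtain ⟨y, hy, hrate⟩ := exists_tendsto_of_norm_deriv_le_integrableOn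
    (fun t ht => (hderiv t ht (hmaps t)).1) hint fun t ht => (hderiv t ht.le (hmaps t)).2
  have hFy : F y = 0 := eq_zero_of_tendsto_of_norm_le_mul_exp_neg
    (fun x hx => (hF x hx).continuousWithinAt) isClosed_closedBall hy
    ((eventually_ge_atTop 0).mono hball) hg₁top
    ((eventually_ge_atTop 0).mono fun t ht => hdecay t ht (hmaps t))
  exact ⟨u, rfl, fun t ht => (hderiv t ht (hmaps t)).1, hball, y, hy, hFy,
    fun t ht => (hrate t ht).trans_eq (integral_const_mul _ _), fun t ht => hdecay t ht (hmaps t)⟩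

end Convergence

end

/-- **Theorem 1 (DSM existence theorem).** Under conditions (1.2)–(1.5) and (1.7),
the Cauchy problem (1.6) has a global solution `u` staying in the ball `B`,
`u(t)` converges strongly to a limit `y` solving `F(y) = 0`, and the
inequalities (1.8) and (1.9) hold. -/
theorem dsm_main_theorem
    {H : Type*} [NormedAddCommGroup H] [InnerProductSpace ℝ H] [CompleteSpace H]
    (F : H → H) (F' : H → H →L[ℝ] H)
    (hF : ∀ u : H, HasFDerivAt F (F' u) u)
    (u₀ : H) (R : ℝ) (hR : 0 < R)
    (B : Set H) (hB : B = {u : H | ‖u - u₀‖ ≤ R})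
    (Φ : ℝ → H → H)
    (hΦcont : ∀ u ∈ B, ContinuousOn (fun t => Φ t u) (Set.Ici (0:ℝ)))
    (L : NNReal) (hΦlip : ∀ t ∈ Set.Ici (0:ℝ), LipschitzOnWith L (Φ t) B)
    (g₁ g₂ : ℝ → ℝ)
    (hg₁pos : ∀ t ≥ (0:ℝ), 0 < g₁ t)
    (hg₂pos : ∀ t ≥ (0:ℝ), 0 < g₂ t)
    (hg₂cont : ContinuousOn g₂ (Set.Ici (0:ℝ)))
    (hg₁loc : ∀ t ≥ (0:ℝ), IntervalIntegrable g₁ volume 0 t)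
    (h12 : ∀ t ≥ (0:ℝ), ∀ u ∈ B, ⟪F' u (Φ t u), F u⟫ ≤ -(g₁ t) * ‖F u‖ ^ 2)
    (h13 : ∀ t ≥ (0:ℝ), ∀ u ∈ B, ‖Φ t u‖ ≤ g₂ t * ‖F u‖)
    (h14 : Tendsto (fun t => ∫ s in (0:ℝ)..t, g₁ s) atTop atTop)
    (G : ℝ → ℝ) (hG : G = fun t => g₂ t * Real.exp (-∫ s in (0:ℝ)..t, g₁ s))
    (h15 : IntegrableOn G (Set.Ici (0:ℝ)))
    (h17 : ‖F u₀‖ * ∫ t in Set.Ioi (0:ℝ), G t ≤ R) :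
    ∃ u : ℝ → H, u 0 = u₀ ∧
      (∀ t ≥ (0:ℝ), HasDerivAt u (Φ t (u t)) t) ∧
      (∀ t ≥ (0:ℝ), u t ∈ B) ∧
      ∃ y : H, Tendsto u atTop (nhds y) ∧ F y = 0 ∧
        (∀ t ≥ (0:ℝ), ‖u t - y‖ ≤ ‖F u₀‖ * ∫ x in Set.Ioi t, G x) ∧
        (∀ t ≥ (0:ℝ), ‖F (u t)‖ ≤ ‖F u₀‖ * Real.exp (-∫ x in (0:ℝ)..t, g₁ x)) := by
  obtain rfl : B = Metric.closedBall u₀ R :=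
    hB.trans (Set.ext fun _ => mem_closedBall_iff_norm.symm)
  subst hG
  exact dsm_main_theorem_general F F' u₀ R hR (fun x _ => (hF x).hasFDerivWithinAt) Φ hΦcont L
    hΦlip g₁ g₂ hg₂pos hg₁loc h12 h13 h14 (h15.mono_set Set.Ioi_subset_Ici_self) h17
end

section
/- Let H be a real Hilbert space, F : H → H continuously Fréchet differentiable, u₀ ∈ H, R > 0, B := {u ∈ H : ‖u − u₀‖ ≤ R}, and let g₁ be a positive locally integrable function on [0,∞). Suppose u : [0,T] → H is differentiable, u(0) = u₀, u(t) ∈ B for all t ∈ [0,T], u̇(t) = Φ(t,u(t)), and ⟨F′(u)Φ(t,u), F(u)⟩ ≤ −g₁(t)‖F(u)‖² for all u ∈ B and t ∈ [0,T]. Then for all t ∈ [0,T]: ‖F(u(t))‖ ≤ ‖F(u₀)‖·exp(−∫₀ᵗ g₁(x) dx). -/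
open MeasureTheory Filter
open scoped RealInnerProductSpace

/-!
Along the flow, `φ = ‖F(u)‖²` satisfies `φ' ≤ -2 g₁ φ`. Where `φ > 0`, the claim follows by
integrating `(log φ)' ≤ -2 g₁`. Zeros of `φ` do no harm: applying the positive case to `φ + ε`,
with `|2 g₁|` in place of `-2 g₁`, and letting `ε → 0` shows that `φ` stays zero once it vanishes.
-/

section Gronwall

open Set

variable {f f' k : ℝ → ℝ} {a b : ℝ}

theorem le_mul_exp_integral_of_deriv_right_le_mul_of_pos (hab : a ≤ b)
    (hf : ContinuousOn f (Icc a b))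
    (hf' : ∀ s ∈ Ioo a b, HasDerivWithinAt f (f' s) (Ioi s) s)
    (hpos : ∀ s ∈ Icc a b, 0 < f s)
    (hk : IntervalIntegrable k volume a b)
    (hle : ∀ s ∈ Ioo a b, f' s ≤ k s * f s) :
    f b ≤ f a * Real.exp (∫ s in a..b, k s) := by
  have ha : 0 < f a := hpos a (left_mem_Icc.2 hab)
  have hb : 0 < f b := hpos b (right_mem_Icc.2 hab)
  have hlog : Real.log (f b) - Real.log (f a) ≤ ∫ s in a..b, k s := by
    refine intervalIntegral.sub_le_integral_of_hasDeriv_right_of_le hab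
      (hf.log fun s hs => (hpos s hs).ne')
      (fun s hs => (hf' s hs).log (hpos s (Ioo_subset_Icc_self hs)).ne')
      ((intervalIntegrable_iff_integrableOn_Icc_of_le hab).1 hk) fun s hs => ?_
    exact (div_le_iff₀ (hpos s (Ioo_subset_Icc_self hs))).2 (hle s hs)
  calc f b = Real.exp (Real.log (f b)) := (Real.exp_log hb).symm
    _ ≤ Real.exp (Real.log (f a) + ∫ s in a..b, k s) := Real.exp_le_exp.2 (by linarith)
    _ = f a * Real.exp (∫ s in a..b, k s) := by rw [Real.exp_add, Real.exp_log ha]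

theorem eq_zero_of_deriv_right_le_mul_of_eq_zero (hab : a ≤ b)
    (hf : ContinuousOn f (Icc a b))
    (hf' : ∀ s ∈ Ioo a b, HasDerivWithinAt f (f' s) (Ioi s) s)
    (hnonneg : ∀ s ∈ Icc a b, 0 ≤ f s)
    (hk : IntervalIntegrable k volume a b)
    (hle : ∀ s ∈ Ioo a b, f' s ≤ k s * f s)
    (ha : f a = 0) : f b = 0 := by
  refine le_antisymm (le_of_forall_pos_le_add fun δ hδ => ?_) (hnonneg b (right_mem_Icc.2 hab))
  set M := Real.exp (∫ s in a..b, |k s|)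
  have hM : 0 < M := Real.exp_pos _
  have hε : 0 < δ / M := div_pos hδ hM
  have hshift : f b + δ / M ≤ (f a + δ / M) * M := by
    refine le_mul_exp_integral_of_deriv_right_le_mul_of_pos hab (hf.add continuousOn_const)
      (fun s hs => (hf' s hs).add_const (δ / M))
      (fun s hs => add_pos_of_nonneg_of_pos (hnonneg s hs) hε) hk.abs fun s hs => ?_
    have hfs : 0 ≤ f s := hnonneg s (Ioo_subset_Icc_self hs)
    calc f' s ≤ k s * f s := hle s hs
      _ ≤ |k s| * f s := by gcongr; exact le_abs_self _
      _ ≤ |k s| * (f s + δ / M) := by gcongr; linarith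
  rw [ha, zero_add, div_mul_cancel₀ δ hM.ne'] at hshift
  linarith

theorem le_mul_exp_integral_of_deriv_right_le_mul (hab : a ≤ b)
    (hf : ContinuousOn f (Icc a b))
    (hf' : ∀ s ∈ Ioo a b, HasDerivWithinAt f (f' s) (Ioi s) s)
    (hnonneg : ∀ s ∈ Icc a b, 0 ≤ f s)
    (hk : IntervalIntegrable k volume a b)
    (hle : ∀ s ∈ Ioo a b, f' s ≤ k s * f s) :
    f b ≤ f a * Real.exp (∫ s in a..b, k s) := by
  by_cases hzero : ∃ c ∈ Icc a b, f c = 0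
  · obtain ⟨c, hc, hfc⟩ := hzero
    have hIoo : Ioo c b ⊆ Ioo a b := Ioo_subset_Ioo_left hc.1
    have hIcc : Icc c b ⊆ Icc a b := Icc_subset_Icc_left hc.1
    have hfb : f b = 0 := eq_zero_of_deriv_right_le_mul_of_eq_zero hc.2 (hf.mono hIcc)
      (fun s hs => hf' s (hIoo hs)) (fun s hs => hnonneg s (hIcc hs))
      (hk.mono_set (by rwa [uIcc_of_le hc.2, uIcc_of_le hab]))
      (fun s hs => hle s (hIoo hs)) hfc
    rw [hfb]
    exact mul_nonneg (hnonneg a (left_mem_Icc.2 hab)) (Real.exp_pos _).le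
  · push Not at hzero
    exact le_mul_exp_integral_of_deriv_right_le_mul_of_pos hab hf hf'
      (fun s hs => (hnonneg s hs).lt_of_ne' (hzero s hs)) hk hle

end Gronwall

section NormDecay

open Set

variable {H : Type*} [NormedAddCommGroup H] [InnerProductSpace ℝ H]

theorem norm_le_mul_exp_neg_integral_of_inner_deriv_right_le {v v' : ℝ → H} {g : ℝ → ℝ} {a b : ℝ}
    (hab : a ≤ b) (hv : ContinuousOn v (Icc a b))
    (hv' : ∀ s ∈ Ioo a b, HasDerivWithinAt v (v' s) (Ioi s) s)
    (hg : IntervalIntegrable g volume a b)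
    (hle : ∀ s ∈ Ioo a b, ⟪v' s, v s⟫ ≤ -g s * ‖v s‖ ^ 2) :
    ‖v b‖ ≤ ‖v a‖ * Real.exp (-∫ s in a..b, g s) := by
  have hsq : ‖v b‖ ^ 2 ≤ ‖v a‖ ^ 2 * Real.exp (∫ s in a..b, -2 * g s) := by
    refine le_mul_exp_integral_of_deriv_right_le_mul (f := fun s => ‖v s‖ ^ 2) hab
      (hv.norm.pow 2) (fun s hs => (hv' s hs).norm_sq) (fun s _ => sq_nonneg ‖v s‖)
      (hg.const_mul (-2)) fun s hs => ?_
    rw [real_inner_comm]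
    linarith [hle s hs]
  refine le_of_sq_le_sq ?_ (by positivity)
  calc ‖v b‖ ^ 2 ≤ ‖v a‖ ^ 2 * Real.exp (∫ s in a..b, -2 * g s) := hsq
    _ = (‖v a‖ * Real.exp (-∫ s in a..b, g s)) ^ 2 := by
      rw [intervalIntegral.integral_const_mul, mul_pow, ← Real.exp_nat_mul]
      congr 2
      push_cast
      ring

theorem dsm_norm_decay_general {E : Type*} [NormedAddCommGroup E] [NormedSpace ℝ E]
    {F : E → H} {F' : E → E →L[ℝ] H} {Φ : ℝ → E → E} {u : ℝ → E} {g : ℝ → ℝ} {a b : ℝ}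
    (hF : ∀ s ∈ Icc a b, HasFDerivAt F (F' (u s)) (u s))
    (hu : ContinuousOn u (Icc a b))
    (hu' : ∀ s ∈ Ioo a b, HasDerivWithinAt u (Φ s (u s)) (Ioi s) s)
    (hg : IntervalIntegrable g volume a b)
    (hle : ∀ s ∈ Ioo a b, ⟪F' (u s) (Φ s (u s)), F (u s)⟫ ≤ -g s * ‖F (u s)‖ ^ 2) :
    ∀ t ∈ Icc a b, ‖F (u t)‖ ≤ ‖F (u a)‖ * Real.exp (-∫ s in a..t, g s) := by
  intro t ht
  have hIcc : Icc a t ⊆ Icc a b := Icc_subset_Icc_right ht.2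
  have hIoo : Ioo a t ⊆ Ioo a b := Ioo_subset_Ioo_right ht.2
  have hFu : ContinuousOn (fun s => F (u s)) (Icc a b) := fun s hs =>
    (hF s hs).continuousAt.comp_continuousWithinAt (hu s hs)
  have hFu' : ∀ s ∈ Ioo a b,
      HasDerivWithinAt (fun s => F (u s)) (F' (u s) (Φ s (u s))) (Ioi s) s := fun s hs =>
    (hF s (Ioo_subset_Icc_self hs)).comp_hasDerivWithinAt s (hu' s hs)
  have hgt : IntervalIntegrable g volume a t :=
    hg.mono_set (by rwa [uIcc_of_le ht.1, uIcc_of_le (ht.1.trans ht.2)])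
  exact norm_le_mul_exp_neg_integral_of_inner_deriv_right_le ht.1 (hFu.mono hIcc)
    (fun s hs => hFu' s (hIoo hs)) hgt fun s hs => hle s (hIoo hs)

end NormDecay

/-- Inequality (1.9): along a solution of `u̇ = Φ(t,u)` staying in the ball `B`,
if `⟨F′(u)Φ(t,u), F(u)⟩ ≤ −g₁(t)‖F(u)‖²` on `B`, then
`‖F(u(t))‖ ≤ ‖F(u₀)‖ exp(−∫₀ᵗ g₁)`. -/
theorem dsm_norm_decay
    {H : Type*} [NormedAddCommGroup H] [InnerProductSpace ℝ H] [CompleteSpace H]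
    (F : H → H) (F' : H → H →L[ℝ] H)
    (hF : ∀ u : H, HasFDerivAt F (F' u) u)
    (hF'cont : Continuous F')
    (u₀ : H) (R : ℝ) (hR : 0 < R)
    (B : Set H) (hB : B = {u : H | ‖u - u₀‖ ≤ R})
    (g₁ : ℝ → ℝ)
    (hg₁pos : ∀ t ≥ (0:ℝ), 0 < g₁ t)
    (hg₁loc : ∀ t ≥ (0:ℝ), IntervalIntegrable g₁ volume 0 t)
    (T : ℝ) (hT : 0 ≤ T)
    (Φ : ℝ → H → H)
    (u : ℝ → H) (hu0 : u 0 = u₀)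
    (huB : ∀ t ∈ Set.Icc (0:ℝ) T, u t ∈ B)
    (hu' : ∀ t ∈ Set.Icc (0:ℝ) T, HasDerivAt u (Φ t (u t)) t)
    (h12 : ∀ t ∈ Set.Icc (0:ℝ) T, ∀ v ∈ B, ⟪F' v (Φ t v), F v⟫ ≤ -(g₁ t) * ‖F v‖ ^ 2) :
    ∀ t ∈ Set.Icc (0:ℝ) T,
      ‖F (u t)‖ ≤ ‖F u₀‖ * Real.exp (-∫ x in (0:ℝ)..t, g₁ x) := by
  have hIcc : ∀ {s}, s ∈ Set.Ioo 0 T → s ∈ Set.Icc 0 T := fun hs => Set.Ioo_subset_Icc_self hs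
  exact hu0 ▸ dsm_norm_decay_general (fun s _ => hF (u s)) (HasDerivAt.continuousOn hu')
    (fun s hs => (hu' s (hIcc hs)).hasDerivWithinAt) (hg₁loc T hT)
    fun s hs => h12 s (hIcc hs) (u s) (huB s (hIcc hs))
end

section
/- Let g : [0,∞) → [0,∞) be differentiable, let g₁ : [0,∞) → (0,∞) be continuous, and let 0 < a < 2. Suppose g(t)·g′(t) ≤ −g₁(t)·g(t)^a for all t ≥ 0. Then for every t ≥ 0: g(t)^{2−a} ≤ max(0, g(0)^{2−a} − (2−a)·∫₀ᵗ g₁(s) ds). In particular, if T > 0 satisfies g(0)^{2−a} − (2−a)·∫₀^T g₁(s) ds = 0, then g(t) = 0 for all t ≥ T. -/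
open MeasureTheory Filter

/-!
Where `g` is positive, the hypothesis says `(g ^ (2 - a))' ≤ -(2 - a) g₁`, and integrating this
gives the bound. To integrate from time `0` up to a time `t` with `g t > 0` one needs `g > 0` on all
of `[0, t]`; this holds since `(g²)' = 2 g g' ≤ 0` makes `g` antitone.
-/

section

open Set

variable {f f' g g' g₁ : ℝ → ℝ} {S : Set ℝ} {a s t : ℝ}

theorem antitoneOn_of_hasDerivWithinAt_Ioi_nonpos [S.OrdConnected] (hf : ContinuousOn f S)
    (hf' : ∀ x ∈ interior S, HasDerivWithinAt f (f' x) (Ioi x) x)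
    (hf'_nonpos : ∀ x ∈ interior S, f' x ≤ 0) :
    AntitoneOn f S := by
  intro x hx y hy hxy
  have hS : Icc x y ⊆ S := S.Icc_subset hx hy
  have hS' : Ioo x y ⊆ interior S := interior_Icc (a := x) ▸ interior_mono hS
  have hsub : f y - f x ≤ ∫ _ in x..y, (0 : ℝ) :=
    intervalIntegral.sub_le_integral_of_hasDeriv_right_of_le hxy (hf.mono hS)
      (fun z hz ↦ hf' z (hS' hz)) integrableOn_zero (fun z hz ↦ hf'_nonpos z (hS' hz))
  simpa using hsub

theorem antitoneOn_of_mul_hasDerivWithinAt_Ioi_nonpos [S.OrdConnected] (hg : ContinuousOn g S)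
    (hg' : ∀ x ∈ interior S, HasDerivWithinAt g (g' x) (Ioi x) x) (hg_nonneg : ∀ x ∈ S, 0 ≤ g x)
    (hgg' : ∀ x ∈ interior S, g x * g' x ≤ 0) :
    AntitoneOn g S := by
  have hsq : AntitoneOn (fun x ↦ g x * g x) S :=
    antitoneOn_of_hasDerivWithinAt_Ioi_nonpos (hg.mul hg)
      (fun x hx ↦ (hg' x hx).fun_mul (hg' x hx)) fun x hx ↦ by linarith [hgg' x hx]
  exact fun x hx y hy hxy ↦ (mul_self_le_mul_self_iff (hg_nonneg y hy) (hg_nonneg x hx)).2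
    (hsq hx hy hxy)

theorem mul_rpow_one_sub_le_of_mul_le_mul_rpow {x y c : ℝ} (hx : 0 < x)
    (h : x * y ≤ c * x ^ a) : y * x ^ (1 - a) ≤ c := by
  rw [Real.rpow_sub hx, Real.rpow_one, ← mul_div_assoc, mul_comm y]
  exact (div_le_iff₀ (Real.rpow_pos_of_pos hx a)).2 h

theorem rpow_le_rpow_sub_integral_of_pos (ha : a ≤ 2) (hst : s ≤ t)
    (hg : ContinuousOn g (Icc s t))
    (hg' : ∀ x ∈ Ioo s t, HasDerivWithinAt g (g' x) (Ioi x) x)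
    (hg_pos : ∀ x ∈ Ioo s t, 0 < g x) (hg₁ : IntegrableOn g₁ (Icc s t))
    (hineq : ∀ x ∈ Ioo s t, g x * g' x ≤ -g₁ x * g x ^ a) :
    g t ^ (2 - a) ≤ g s ^ (2 - a) - (2 - a) * ∫ x in s..t, g₁ x := by
  have hderiv (x : ℝ) (hx : x ∈ Ioo s t) :
      HasDerivWithinAt (fun x ↦ g x ^ (2 - a)) (g' x * (2 - a) * g x ^ (2 - a - 1)) (Ioi x) x :=
    (hg' x hx).rpow_const (.inl (hg_pos x hx).ne')
  have hderiv_le (x : ℝ) (hx : x ∈ Ioo s t) :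
      g' x * (2 - a) * g x ^ (2 - a - 1) ≤ -(2 - a) * g₁ x := calc
    g' x * (2 - a) * g x ^ (2 - a - 1) = (2 - a) * (g' x * g x ^ (1 - a)) := by ring_nf
    _ ≤ (2 - a) * -g₁ x :=
      mul_le_mul_of_nonneg_left (mul_rpow_one_sub_le_of_mul_le_mul_rpow (hg_pos x hx) (hineq x hx))
        (sub_nonneg.2 ha)
    _ = -(2 - a) * g₁ x := by ring
  have hsub : g t ^ (2 - a) - g s ^ (2 - a) ≤ ∫ x in s..t, -(2 - a) * g₁ x :=
    intervalIntegral.sub_le_integral_of_hasDeriv_right_of_le hst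
      (hg.rpow_const fun _ _ ↦ .inr (sub_nonneg.2 ha)) hderiv (hg₁.const_mul _) hderiv_le
  rw [intervalIntegral.integral_const_mul] at hsub
  linarith

theorem rpow_le_max_zero_rpow_sub_integral (ha : a < 2) (hst : s ≤ t)
    (hg : ContinuousOn g (Icc s t))
    (hg' : ∀ x ∈ Ioo s t, HasDerivWithinAt g (g' x) (Ioi x) x)
    (hg_nonneg : ∀ x ∈ Icc s t, 0 ≤ g x) (hg₁_nonneg : ∀ x ∈ Ioo s t, 0 ≤ g₁ x)
    (hg₁ : IntegrableOn g₁ (Icc s t))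
    (hineq : ∀ x ∈ Ioo s t, 0 < g x → g x * g' x ≤ -g₁ x * g x ^ a) :
    g t ^ (2 - a) ≤ max 0 (g s ^ (2 - a) - (2 - a) * ∫ x in s..t, g₁ x) := by
  have ht : t ∈ Icc s t := right_mem_Icc.2 hst
  rcases (hg_nonneg t ht).eq_or_lt with hgt | hgt
  · rw [← hgt, Real.zero_rpow (sub_pos.2 ha).ne']
    exact le_max_left _ _
  have hgg' (x : ℝ) (hx : x ∈ Ioo s t) : g x * g' x ≤ 0 := by
    rcases (hg_nonneg x (Ioo_subset_Icc_self hx)).eq_or_lt with hgx | hgx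
    · rw [← hgx, zero_mul]
    · exact (hineq x hx hgx).trans <| mul_nonpos_of_nonpos_of_nonneg
        (neg_nonpos.2 (hg₁_nonneg x hx)) (Real.rpow_nonneg hgx.le a)
  have hanti : AntitoneOn g (Icc s t) :=
    antitoneOn_of_mul_hasDerivWithinAt_Ioi_nonpos hg (by rwa [interior_Icc]) hg_nonneg
      (by rwa [interior_Icc])
  have hg_pos (x : ℝ) (hx : x ∈ Ioo s t) : 0 < g x :=
    hgt.trans_le (hanti (Ioo_subset_Icc_self hx) ht hx.2.le)
  exact (rpow_le_rpow_sub_integral_of_pos ha.le hst hg hg' hg_pos hg₁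
    fun x hx ↦ hineq x hx (hg_pos x hx)).trans (le_max_right _ _)

/- The inequality is imposed only where `g > 0` because of the convention for `0 ^ a`: it equals `1`
at `a = 0` and `0` for `a < 0`. For `a ≤ 0`, extinction can occur without a two-sided derivative:
`√(max 0 (c - 2 * t))` solves the case `a = 0`, `g₁ = 1`. -/
theorem differential_inequality_finite_extinction_general (ha : a < 2)
    (hg : ContinuousOn g (Ici 0)) (hg' : ∀ t > 0, HasDerivWithinAt g (g' t) (Ioi t) t)
    (hg_nonneg : ∀ t ≥ 0, 0 ≤ g t) (hg₁_nonneg : ∀ t > 0, 0 ≤ g₁ t)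
    (hg₁ : LocallyIntegrableOn g₁ (Ici 0))
    (hineq : ∀ t > 0, 0 < g t → g t * g' t ≤ -g₁ t * g t ^ a) :
    (∀ t ≥ 0, g t ^ (2 - a) ≤ max 0 (g 0 ^ (2 - a) - (2 - a) * ∫ s in (0 : ℝ)..t, g₁ s)) ∧
      ∀ T > 0, g 0 ^ (2 - a) - (2 - a) * (∫ s in (0 : ℝ)..T, g₁ s) = 0 → ∀ t ≥ T, g t = 0 := by
  have hint (t : ℝ) : IntegrableOn g₁ (Icc 0 t) :=
    hg₁.integrableOn_compact_subset Icc_subset_Ici_self isCompact_Icc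
  have hbound (t : ℝ) (ht : 0 ≤ t) :
      g t ^ (2 - a) ≤ max 0 (g 0 ^ (2 - a) - (2 - a) * ∫ s in (0 : ℝ)..t, g₁ s) :=
    rpow_le_max_zero_rpow_sub_integral ha ht (hg.mono Icc_subset_Ici_self)
      (fun x hx ↦ hg' x hx.1) (fun x hx ↦ hg_nonneg x hx.1) (fun x hx ↦ hg₁_nonneg x hx.1)
      (hint t) (fun x hx ↦ hineq x hx.1)
  refine ⟨hbound, fun T hT hT_eq t hTt ↦ ?_⟩
  have ht : 0 ≤ t := hT.le.trans hTt
  have hmono : ∫ s in (0 : ℝ)..T, g₁ s ≤ ∫ s in (0 : ℝ)..t, g₁ s :=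
    intervalIntegral.integral_mono_interval le_rfl hT.le hTt
      (ae_restrict_of_forall_mem measurableSet_Ioc fun x hx ↦ hg₁_nonneg x hx.1)
      ((intervalIntegrable_iff_integrableOn_Icc_of_le ht).2 (hint t))
  have hrhs : g 0 ^ (2 - a) - (2 - a) * ∫ s in (0 : ℝ)..t, g₁ s ≤ 0 := by
    linarith [mul_le_mul_of_nonneg_left hmono (sub_pos.2 ha).le]
  have hpow : g t ^ (2 - a) = 0 :=
    ((hbound t ht).trans_eq (max_eq_left hrhs)).antisymm (Real.rpow_nonneg (hg_nonneg t ht) _)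
  exact (Real.rpow_eq_zero (hg_nonneg t ht) (sub_pos.2 ha).ne').1 hpow

end

/-- Inequality (2.3)–(2.4): if `g ≥ 0` satisfies `g g′ ≤ −g₁ gᵃ` with `0 < a < 2`
and `g₁ > 0` continuous, then `g(t)^{2−a} ≤ max(0, g(0)^{2−a} − (2−a)∫₀ᵗ g₁)`;
in particular `g ≡ 0` past the time `T` at which the right side vanishes. -/
theorem differential_inequality_finite_extinction
    (g g' g₁ : ℝ → ℝ)
    (hg : ∀ t ≥ (0:ℝ), HasDerivAt g (g' t) t)
    (hgnn : ∀ t ≥ (0:ℝ), 0 ≤ g t)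
    (hg₁pos : ∀ t ≥ (0:ℝ), 0 < g₁ t)
    (hg₁cont : ContinuousOn g₁ (Set.Ici (0:ℝ)))
    (a : ℝ) (ha : 0 < a) (ha2 : a < 2)
    (hineq : ∀ t ≥ (0:ℝ), g t * g' t ≤ -(g₁ t) * g t ^ a) :
    (∀ t ≥ (0:ℝ), g t ^ (2 - a) ≤ max 0 (g 0 ^ (2 - a) - (2 - a) * ∫ s in (0:ℝ)..t, g₁ s))
      ∧ ∀ T > (0:ℝ), g 0 ^ (2 - a) - (2 - a) * (∫ s in (0:ℝ)..T, g₁ s) = 0 →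
          ∀ t ≥ T, g t = 0 := by
  exact differential_inequality_finite_extinction_general ha2 (HasDerivAt.continuousOn hg)
    (fun t ht ↦ (hg t ht.le).hasDerivWithinAt) hgnn (fun t ht ↦ (hg₁pos t ht.le).le)
    (hg₁cont.locallyIntegrableOn measurableSet_Ici) (fun t ht _ ↦ hineq t ht.le)
end

section
/- Let g : [0,∞) → [0,∞) be differentiable with g(0) > 0, let g₁ : [0,∞) → (0,∞) be continuous, and let a > 2. Suppose g(t)·g′(t) ≤ −g₁(t)·g(t)^a for all t ≥ 0. Then for every t ≥ 0: g(t) ≤ [g(0)^{−(a−2)} + (a−2)·∫₀ᵗ g₁(s) ds]^{−1/(a−2)}. Moreover, if ∫₀^∞ g₁(s) ds = +∞, then g(t) → 0 as t → ∞. -/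
open MeasureTheory Filter

/-!
Where `g > 0`, dividing `g g' ≤ -g₁ gᵃ` by `gᵃ` turns it into
`(g ^ (-(a - 2)))' ≥ (a - 2) g₁`, which integrates to the bound. If `g` vanished somewhere before a
time `d` with `g d > 0`, integrating from just after its last zero up to `d` would bound
`g ^ (-(a - 2))` near that zero, where it blows up. Hence `g` is positive on all of `[0, d]`.
-/

section

open Set

/-- The differential inequality `g g' ≤ -g₁ gᵃ` for a nonnegative function on `[c, d]`, in the form
to which the one-sided fundamental theorem of calculus applies: `g` is continuous up to the
endpoints and `g'` is its right derivative in the interior. -/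
structure IsDecaySubsolutionOn (g g' g₁ : ℝ → ℝ) (a c d : ℝ) : Prop where
  continuousOn : ContinuousOn g (Icc c d)
  hasDerivWithinAt : ∀ t ∈ Ioo c d, HasDerivWithinAt g (g' t) (Ioi t) t
  nonneg : ∀ t ∈ Icc c d, 0 ≤ g t
  integrableOn : IntegrableOn g₁ (Icc c d)
  mul_deriv_le : ∀ t ∈ Ioo c d, g t * g' t ≤ -(g₁ t) * g t ^ a

theorem mul_le_mul_rpow_of_mul_le_neg_mul_rpow {x v k a : ℝ} (ha : 2 ≤ a) (hx : 0 < x)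
    (h : x * v ≤ -k * x ^ a) : (a - 2) * k ≤ v * -(a - 2) * x ^ (-(a - 2) - 1) := by
  have hsplit : x ^ (-(a - 2) - 1) = x / x ^ a := by
    rw [show -(a - 2) - 1 = 1 - a by ring, Real.rpow_sub hx, Real.rpow_one]
  have hdiv : x * v / x ^ a ≤ -k := (div_le_iff₀ (Real.rpow_pos_of_pos hx a)).2 h
  calc (a - 2) * k ≤ (a - 2) * -(x * v / x ^ a) :=
        mul_le_mul_of_nonneg_left (le_neg_of_le_neg hdiv) (sub_nonneg.2 ha)
    _ = v * -(a - 2) * x ^ (-(a - 2) - 1) := by rw [hsplit]; ring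

namespace IsDecaySubsolutionOn

variable {g g' g₁ : ℝ → ℝ} {a c d s : ℝ}

theorem mono_left (h : IsDecaySubsolutionOn g g' g₁ a c d) (hcs : c ≤ s) :
    IsDecaySubsolutionOn g g' g₁ a s d where
  continuousOn := h.continuousOn.mono (Icc_subset_Icc_left hcs)
  hasDerivWithinAt t ht := h.hasDerivWithinAt t (Ioo_subset_Ioo_left hcs ht)
  nonneg t ht := h.nonneg t (Icc_subset_Icc_left hcs ht)
  integrableOn := h.integrableOn.mono_set (Icc_subset_Icc_left hcs)
  mul_deriv_le t ht := h.mul_deriv_le t (Ioo_subset_Ioo_left hcs ht)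

theorem mul_integral_le_rpow_sub_rpow (h : IsDecaySubsolutionOn g g' g₁ a c d) (ha : 2 ≤ a)
    (hcd : c ≤ d) (hpos : ∀ t ∈ Icc c d, 0 < g t) :
    (a - 2) * ∫ t in c..d, g₁ t ≤ g d ^ (-(a - 2)) - g c ^ (-(a - 2)) := by
  rw [← intervalIntegral.integral_const_mul]
  have hpos' (t : ℝ) (ht : t ∈ Ioo c d) : 0 < g t := hpos t (Ioo_subset_Icc_self ht)
  exact intervalIntegral.integral_le_sub_of_hasDeriv_right_of_le hcd
    (h.continuousOn.rpow_const fun t ht => Or.inl (hpos t ht).ne')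
    (fun t ht => (h.hasDerivWithinAt t ht).rpow_const (Or.inl (hpos' t ht).ne'))
    (h.integrableOn.const_mul (a - 2))
    (fun t ht => mul_le_mul_rpow_of_mul_le_neg_mul_rpow ha (hpos' t ht) (h.mul_deriv_le t ht))

theorem pos_left_of_pos_Ioc (h : IsDecaySubsolutionOn g g' g₁ a c d) (ha : 2 < a) (hcd : c < d)
    (hpos : ∀ t ∈ Ioc c d, 0 < g t) : 0 < g c := by
  let F : ℝ → ℝ := fun s => g s ^ (a - 2) * (g d ^ (-(a - 2)) - (a - 2) * ∫ t in s..d, g₁ t)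
  have hF : ContinuousOn F (Icc c d) := by
    have hint : ContinuousOn (fun s => ∫ t in s..d, g₁ t) (Icc c d) := by
      rw [← uIcc_of_le hcd.le]
      apply intervalIntegral.continuousOn_primitive_interval_left
      rw [uIcc_of_le hcd.le]
      exact h.integrableOn
    exact (h.continuousOn.rpow_const fun _ _ => Or.inr (sub_nonneg.2 ha.le)).mul
      (continuousOn_const.sub (continuousOn_const.mul hint))
  have hF_Ioc : ∀ s ∈ Ioc c d, 1 ≤ F s := by
    intro s hs
    have hbound := (h.mono_left hs.1.le).mul_integral_le_rpow_sub_rpow ha.le hs.2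
      fun t ht => hpos t ⟨hs.1.trans_le ht.1, ht.2⟩
    calc 1 = g s ^ (a - 2) * g s ^ (-(a - 2)) := by
          rw [← Real.rpow_add (hpos s hs), add_neg_cancel, Real.rpow_zero]
      _ ≤ F s := mul_le_mul_of_nonneg_left (le_sub_comm.1 hbound)
          (Real.rpow_nonneg (hpos s hs).le _)
  have hclosure : closure (Ioc c d) = Icc c d := closure_Ioc hcd.ne
  have hFc : 1 ≤ F c := le_on_closure hF_Ioc continuousOn_const (hclosure ▸ hF)
    (hclosure ▸ left_mem_Icc.2 hcd.le)
  refine (h.nonneg c (left_mem_Icc.2 hcd.le)).lt_of_ne' fun hgc => ?_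
  have hFc_zero : F c = 0 := by simp only [F, hgc, Real.zero_rpow (sub_pos.2 ha).ne', zero_mul]
  exact absurd (hFc_zero ▸ hFc) zero_lt_one.not_ge

theorem pos_Icc_of_pos_right (h : IsDecaySubsolutionOn g g' g₁ a c d) (ha : 2 < a)
    (hd : 0 < g d) : ∀ t ∈ Icc c d, 0 < g t := by
  intro t ht
  refine (h.nonneg t ht).lt_of_ne' fun hgt => ?_
  have hcompact : IsCompact (Icc c d ∩ g ⁻¹' {0}) :=
    isCompact_Icc.of_isClosed_subset
      (h.continuousOn.preimage_isClosed_of_isClosed isClosed_Icc isClosed_singleton)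
      inter_subset_left
  obtain ⟨z, ⟨hz, hgz⟩, hlast⟩ := hcompact.exists_isGreatest ⟨t, ht, hgt⟩
  have hzd : z < d := hz.2.lt_of_ne fun hzd => hd.ne' (hzd ▸ hgz)
  have hpos : ∀ s ∈ Ioc z d, 0 < g s := fun s hs =>
    have hs' : s ∈ Icc c d := ⟨hz.1.trans hs.1.le, hs.2⟩
    (h.nonneg s hs').lt_of_ne' fun hgs => hs.1.not_ge (hlast ⟨hs', hgs⟩)
  exact ((h.mono_left hz.1).pos_left_of_pos_Ioc ha hzd hpos).ne' hgz

theorem le_rpow_add_mul_integral (h : IsDecaySubsolutionOn g g' g₁ a c d) (ha : 2 < a)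
    (hcd : c ≤ d) (hB : 0 < g c ^ (-(a - 2)) + (a - 2) * ∫ t in c..d, g₁ t) :
    g d ≤ (g c ^ (-(a - 2)) + (a - 2) * ∫ t in c..d, g₁ t) ^ (-(1 / (a - 2))) := by
  rcases (h.nonneg d (right_mem_Icc.2 hcd)).eq_or_lt with hd | hd
  · exact hd ▸ Real.rpow_nonneg hB.le _
  · have hbound := h.mul_integral_le_rpow_sub_rpow ha.le hcd (h.pos_Icc_of_pos_right ha hd)
    rw [one_div, ← inv_neg,
      Real.le_rpow_inv_iff_of_neg hd hB (neg_neg_of_pos (sub_pos.2 ha))]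
    exact le_sub_iff_add_le'.1 hbound

end IsDecaySubsolutionOn

theorem differential_inequality_decay_general
    (g g' g₁ : ℝ → ℝ)
    (hgcont : ContinuousOn g (Ici 0))
    (hg : ∀ t > 0, HasDerivWithinAt g (g' t) (Ioi t) t)
    (hgnn : ∀ t ≥ 0, 0 ≤ g t)
    (hg₁ : LocallyIntegrableOn g₁ (Ici 0))
    (a : ℝ) (ha : 2 < a)
    (hineq : ∀ t > 0, g t * g' t ≤ -(g₁ t) * g t ^ a) :
    (∀ t ≥ 0, 0 < g 0 ^ (-(a - 2)) + (a - 2) * ∫ s in (0 : ℝ)..t, g₁ s →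
        g t ≤ (g 0 ^ (-(a - 2)) + (a - 2) * ∫ s in (0 : ℝ)..t, g₁ s) ^ (-(1 / (a - 2))))
      ∧ (Tendsto (fun t => ∫ s in (0 : ℝ)..t, g₁ s) atTop atTop → Tendsto g atTop (nhds 0)) := by
  have hsub (t : ℝ) : IsDecaySubsolutionOn g g' g₁ a 0 t :=
    { continuousOn := hgcont.mono Icc_subset_Ici_self
      hasDerivWithinAt := fun s hs => hg s hs.1
      nonneg := fun s hs => hgnn s hs.1
      integrableOn := hg₁.integrableOn_compact_subset Icc_subset_Ici_self isCompact_Icc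
      mul_deriv_le := fun s hs => hineq s hs.1 }
  refine ⟨fun t ht hB => (hsub t).le_rpow_add_mul_integral ha ht hB, fun hint => ?_⟩
  have hB := tendsto_atTop_add_const_left atTop (g 0 ^ (-(a - 2)))
    (hint.const_mul_atTop (sub_pos.2 ha))
  refine tendsto_of_tendsto_of_tendsto_of_le_of_le' tendsto_const_nhds
    ((tendsto_rpow_neg_atTop (one_div_pos.2 (sub_pos.2 ha))).comp hB)
    ((eventually_ge_atTop 0).mono hgnn) ?_
  filter_upwards [eventually_ge_atTop 0, hB.eventually_gt_atTop 0] with t ht hBt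
  exact (hsub t).le_rpow_add_mul_integral ha ht hBt

end

/-- Inequality (2.5): if `g ≥ 0`, `g(0) > 0`, satisfies `g g′ ≤ −g₁ gᵃ` with
`a > 2` and `g₁ > 0` continuous, then
`g(t) ≤ [g(0)^{−(a−2)} + (a−2)∫₀ᵗ g₁]^{−1/(a−2)}`, and `g(t) → 0` if
`∫₀^∞ g₁ = ∞`. -/
theorem differential_inequality_decay
    (g g' g₁ : ℝ → ℝ)
    (hg : ∀ t ≥ (0:ℝ), HasDerivAt g (g' t) t)
    (hgnn : ∀ t ≥ (0:ℝ), 0 ≤ g t)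
    (hg0 : 0 < g 0)
    (hg₁pos : ∀ t ≥ (0:ℝ), 0 < g₁ t)
    (hg₁cont : ContinuousOn g₁ (Set.Ici (0:ℝ)))
    (a : ℝ) (ha : 2 < a)
    (hineq : ∀ t ≥ (0:ℝ), g t * g' t ≤ -(g₁ t) * g t ^ a) :
    (∀ t ≥ (0:ℝ),
        g t ≤ (g 0 ^ (-(a - 2)) + (a - 2) * ∫ s in (0:ℝ)..t, g₁ s) ^ (-(1 / (a - 2))))
      ∧ (Tendsto (fun t => ∫ s in (0:ℝ)..t, g₁ s) atTop atTop →
          Tendsto g atTop (nhds 0)) := by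
  have hdecay := differential_inequality_decay_general g g' g₁
    (fun t ht => (hg t ht).continuousAt.continuousWithinAt)
    (fun t ht => (hg t ht.le).hasDerivWithinAt) hgnn
    (hg₁cont.locallyIntegrableOn measurableSet_Ici) a ha (fun t ht => hineq t ht.le)
  refine ⟨fun t ht => hdecay.1 t ht (add_pos_of_pos_of_nonneg (Real.rpow_pos_of_pos hg0 _) ?_),
    hdecay.2⟩
  exact mul_nonneg (sub_nonneg.2 ha.le)
    (intervalIntegral.integral_nonneg ht fun s hs => (hg₁pos s hs.1).le)
end

section
/- Continuous Newton method. Let H be a real Hilbert space, u₀ ∈ H, R > 0, B := {u ∈ H : ‖u − u₀‖ ≤ R}, and let F : H → H be twice Fréchet differentiable with ‖F″(u)‖ ≤ M₂ for all u ∈ B. Assume that F′(u) is boundedly invertible with ‖[F′(u)]^{−1}‖ ≤ m₁ for all u ∈ B, and that m₁·‖F(u₀)‖ ≤ R. Then the Cauchy problem u̇(t) = −[F′(u(t))]^{−1}F(u(t)), u(0) = u₀ has a global solution u with u(t) ∈ B for all t ≥ 0; the strong limit y := lim_{t→∞} u(t) exists; F(y) = 0; and for all t ≥ 0: ‖F(u(t))‖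 ≤ ‖F(u₀)‖·e^{−t} and ‖u(t) − y‖ ≤ m₁·‖F(u₀)‖·e^{−t}. -/
open MeasureTheory Filter
open scoped RealInnerProductSpace

/-!
The substitution `τ = 1 - e^{-t}` turns the Newton flow `u' = -[F'(u)]⁻¹ F(u)` into Davidenko's
equation `w' = -[F'(w)]⁻¹ F(u₀)`, in which the residual is frozen. Along a solution `F ∘ w` has the
constant derivative `-F(u₀)`, so `F(w τ) = (1 - τ) F(u₀)`. The right-hand side of Davidenko's
equation is Lipschitz and bounded by `m₁ ‖F(u₀)‖ ≤ R` on the ball, so Picard–Lindelöf yields a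
solution up to time `τ = 1`, that is `t = ∞`, and its endpoint `w 1` is the zero of `F`.
-/

open Metric Set
open scoped NNReal Topology

section PicardLindelof

variable {E : Type*} [NormedAddCommGroup E] {f : ℝ → E → E} {tmin tmax : ℝ}
  {t₀ : Icc tmin tmax} {x₀ x : E} {a r L K : ℝ≥0}

theorem isPicardLindelof_indicator_closedBall (hf : IsPicardLindelof f t₀ x₀ a r L K) :
    IsPicardLindelof (fun t ↦ (closedBall x₀ a).indicator (f t)) t₀ x₀ a r L K where
  lipschitzOnWith t ht := fun y hy z hz ↦ by
    simpa only [indicator_of_mem hy, indicator_of_mem hz] using hf.lipschitzOnWith t ht hy hz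
  continuousOn y hy := (hf.continuousOn y hy).congr fun _ _ ↦ indicator_of_mem hy _
  norm_le t ht y hy := (indicator_of_mem hy (f t)).symm ▸ hf.norm_le t ht y hy
  mul_max_le := hf.mul_max_le

theorem exists_hasDerivWithinAt_mem_closedBall_of_isPicardLindelof [NormedSpace ℝ E]
    [CompleteSpace E] (hf : IsPicardLindelof f t₀ x₀ a r L K) (hx : x ∈ closedBall x₀ r) :
    ∃ α : ℝ → E, α t₀ = x ∧ ∀ t ∈ Icc tmin tmax, α t ∈ closedBall x₀ a ∧
      HasDerivWithinAt α (f t (α t)) (Icc tmin tmax) t := by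
  -- Extended by zero, the field is bounded by `L` everywhere, so the ball need not be known to
  -- contain the solution before its speed can be estimated.
  obtain ⟨α, hα₀, hα⟩ :=
    (isPicardLindelof_indicator_closedBall hf).exists_eq_forall_mem_Icc_hasDerivWithinAt hx
  have speed_le : ∀ t ∈ Icc tmin tmax, ‖(closedBall x₀ a).indicator (f t) (α t)‖ ≤ L := by
    intro t ht
    by_cases hαt : α t ∈ closedBall x₀ a
    · simpa only [indicator_of_mem hαt] using hf.norm_le t ht _ hαt
    · simp only [indicator_of_notMem hαt, norm_zero, NNReal.zero_le_coe]
  have mem_ball : ∀ t ∈ Icc tmin tmax, α t ∈ closedBall x₀ a := by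
    intro t ht
    have abs_sub_le : |t - t₀| ≤ max (tmax - t₀) (t₀ - tmin) :=
      abs_sub_le_max_sub ht.1 ht.2 _
    rw [mem_closedBall]
    calc dist (α t) x₀ ≤ dist (α t) (α t₀) + dist x x₀ := hα₀ ▸ dist_triangle _ _ _
      _ ≤ L * |t - t₀| + r := by
        gcongr
        · simpa only [dist_eq_norm, Real.norm_eq_abs] using
            (convex_Icc tmin tmax).norm_image_sub_le_of_norm_hasDerivWithin_le hα speed_le t₀.2 ht
        · exact hx
      _ ≤ L * max (tmax - t₀) (t₀ - tmin) + r := by gcongr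
      _ ≤ a := le_sub_iff_add_le.mp hf.mul_max_le
  refine ⟨α, hα₀, fun t ht ↦ ⟨mem_ball t ht, ?_⟩⟩
  simpa only [indicator_of_mem (mem_ball t ht)] using hα t ht

end PicardLindelof

section Inverse

variable {𝕜 E G : Type*} [NontriviallyNormedField 𝕜] [SeminormedAddCommGroup E] [NormedSpace 𝕜 E]
  [SeminormedAddCommGroup G] [NormedSpace 𝕜 G]

theorem nnnorm_leftInverse_sub_rightInverse_le {S T : E →L[𝕜] G} {S' T' : G →L[𝕜] E}
    (hS : S'.comp S = .id 𝕜 E) (hT : T.comp T' = .id 𝕜 G) :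
    ‖S' - T'‖₊ ≤ ‖S'‖₊ * (‖S - T‖₊ * ‖T'‖₊) := by
  have resolvent_identity : S' - T' = -(S'.comp ((S - T).comp T')) := by
    rw [ContinuousLinearMap.sub_comp, hT, ContinuousLinearMap.comp_sub,
      ← ContinuousLinearMap.comp_assoc, hS, ContinuousLinearMap.id_comp,
      ContinuousLinearMap.comp_id, neg_sub]
  calc ‖S' - T'‖₊ = ‖S'.comp ((S - T).comp T')‖₊ := by rw [resolvent_identity, nnnorm_neg]
    _ ≤ ‖S'‖₊ * ‖(S - T).comp T'‖₊ := S'.opNNNorm_comp_le _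
    _ ≤ ‖S'‖₊ * (‖S - T‖₊ * ‖T'‖₊) := by gcongr; exact (S - T).opNNNorm_comp_le _

theorem lipschitzOnWith_inverse {X : Type*} [PseudoMetricSpace X] {s : Set X}
    {A : X → E →L[𝕜] G} {Ainv : X → G →L[𝕜] E} {K m : ℝ≥0} (hA : LipschitzOnWith K A s)
    (hright : ∀ x ∈ s, (A x).comp (Ainv x) = .id 𝕜 G)
    (hleft : ∀ x ∈ s, (Ainv x).comp (A x) = .id 𝕜 E)
    (hm : ∀ x ∈ s, ‖Ainv x‖₊ ≤ m) : LipschitzOnWith (m * (K * m)) Ainv s := by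
  refine LipschitzOnWith.of_dist_le_mul fun x hx y hy ↦ ?_
  rw [dist_eq_norm]
  have hAxy : ‖A x - A y‖₊ ≤ K * nndist x y := by
    exact_mod_cast dist_eq_norm (A x) (A y) ▸ hA.dist_le_mul x hx y hy
  have : ‖Ainv x - Ainv y‖₊ ≤ m * (K * m) * nndist x y :=
    calc ‖Ainv x - Ainv y‖₊
      _ ≤ ‖Ainv x‖₊ * (‖A x - A y‖₊ * ‖Ainv y‖₊) :=
        nnnorm_leftInverse_sub_rightInverse_le (hleft x hx) (hright y hy)
      _ ≤ m * (K * nndist x y * m) := by gcongr; exacts [hm x hx, hm y hy]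
      _ = m * (K * m) * nndist x y := by ring
  exact_mod_cast this

end Inverse

theorem eq_add_smul_of_hasDerivWithinAt_const {G : Type*} [NormedAddCommGroup G] [NormedSpace ℝ G]
    {g : ℝ → G} {v : G} {I : Set ℝ} (hI : Convex ℝ I)
    (hg : ∀ τ ∈ I, HasDerivWithinAt g v I τ) {σ τ : ℝ} (hσ : σ ∈ I) (hτ : τ ∈ I) :
    g τ = g σ + (τ - σ) • v := by
  have hzero : ∀ ρ ∈ I, HasDerivWithinAt (fun ρ ↦ g ρ - ρ • v) 0 I ρ := fun ρ hρ ↦ by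
    simpa using! (hg ρ hρ).sub ((hasDerivWithinAt_id ρ I).smul_const v)
  have hconst : ‖(g τ - τ • v) - (g σ - σ • v)‖ ≤ 0 * ‖τ - σ‖ :=
    hI.norm_image_sub_le_of_norm_hasDerivWithin_le hzero (fun _ _ ↦ norm_zero.le) hσ hτ
  rw [zero_mul, norm_le_zero_iff, sub_eq_zero] at hconst
  linear_combination (norm := module) hconst

theorem tendsto_of_norm_sub_le_mul_exp_neg {E : Type*} [SeminormedAddCommGroup E] {u : ℝ → E}
    {y : E} {C : ℝ} (h : ∀ t ≥ 0, ‖u t - y‖ ≤ C * Real.exp (-t)) : Tendsto u atTop (𝓝 y) := by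
  rw [tendsto_iff_norm_sub_tendsto_zero]
  have bound_tendsto : Tendsto (fun t ↦ C * Real.exp (-t)) atTop (𝓝 0) := by
    simpa only [mul_zero] using Real.tendsto_exp_neg_atTop_nhds_zero.const_mul C
  exact squeeze_zero' (Eventually.of_forall fun _ ↦ norm_nonneg _)
    ((eventually_ge_atTop 0).mono h) bound_tendsto

/-- The time change `t ↦ 1 - e^{-t}`, which maps `[0, ∞)` onto `[0, 1)`; it carries solutions of
Davidenko's equation to solutions of the Newton flow. -/
noncomputable def newtonTime (t : ℝ) : ℝ := 1 - Real.exp (-t)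

theorem newtonTime_zero : newtonTime 0 = 0 := by
  simp only [newtonTime, neg_zero, Real.exp_zero, sub_self]

theorem one_sub_newtonTime (t : ℝ) : 1 - newtonTime t = Real.exp (-t) :=
  sub_sub_cancel _ _

theorem newtonTime_mem_Ico {t : ℝ} (ht : 0 ≤ t) : newtonTime t ∈ Ico (0 : ℝ) 1 :=
  ⟨sub_nonneg.mpr (Real.exp_le_one_iff.mpr (neg_nonpos.mpr ht)), sub_lt_self _ (Real.exp_pos _)⟩

theorem hasDerivAt_newtonTime (t : ℝ) : HasDerivAt newtonTime (Real.exp (-t)) t := by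
  simpa using! ((hasDerivAt_neg t).exp).const_sub 1

section Davidenko

variable {E G : Type*} [NormedAddCommGroup E] [NormedSpace ℝ E]
  [NormedAddCommGroup G] [NormedSpace ℝ G]

/-- `w` solves Davidenko's equation `w' = -[F'(w)]⁻¹ b` on the set of times `I` and stays in `s`.
The operator `Finv u` stands for `[F'(u)]⁻¹`, and `b` for the residual `F (w 0)`. Derivatives are
taken within `I`, hence one-sided at the endpoints of an interval. -/
structure IsDavidenkoPath (Finv : E → G →L[ℝ] E) (b : G) (s : Set E) (I : Set ℝ) (w : ℝ → E) :
    Prop where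
  mapsTo : MapsTo w I s
  hasDerivWithinAt : ∀ τ ∈ I, HasDerivWithinAt w (-Finv (w τ) b) I τ

variable {F : E → G} {F' : E → E →L[ℝ] G} {Finv : E → G →L[ℝ] E} {b : G} {s : Set E} {I : Set ℝ}
  {w : ℝ → E} {m : ℝ}

theorem exists_isDavidenkoPath [CompleteSpace E] {u₀ : E} {R : ℝ} {K : ℝ≥0} (hR : 0 ≤ R)
    (hFinv : LipschitzOnWith K Finv (closedBall u₀ R))
    (hm : ∀ u ∈ closedBall u₀ R, ‖Finv u‖ ≤ m) (hb : m * ‖b‖ ≤ R) :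
    ∃ w, w 0 = u₀ ∧ IsDavidenkoPath Finv b (closedBall u₀ R) (Icc (-1) 1) w := by
  lift R to ℝ≥0 using hR
  have field_lipschitz := (-ContinuousLinearMap.apply ℝ E b).lipschitz.comp_lipschitzOnWith hFinv
  have field_bound : ∀ u ∈ closedBall u₀ R, ‖-Finv u b‖ ≤ R := fun u hu ↦
    (norm_neg _).trans_le (((Finv u).le_of_opNorm_le (hm u hu) b).trans hb)
  have hPL : IsPicardLindelof (fun _ u ↦ -Finv u b) (⟨0, by simp⟩ : Icc (-1 : ℝ) 1) u₀ R 0 R _ :=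
    .of_time_independent field_bound field_lipschitz (by simp)
  obtain ⟨w, hw₀, hw⟩ := exists_hasDerivWithinAt_mem_closedBall_of_isPicardLindelof hPL
    (mem_closedBall_self le_rfl)
  exact ⟨w, hw₀, fun τ hτ ↦ (hw τ hτ).1, fun τ hτ ↦ (hw τ hτ).2⟩

namespace IsDavidenkoPath

theorem map_eq_sub_smul (hw : IsDavidenkoPath Finv b s I w) (hI : Convex ℝ I)
    (hF' : ∀ u ∈ s, HasFDerivWithinAt F (F' u) s u)
    (hinv : ∀ u ∈ s, (F' u).comp (Finv u) = .id ℝ G) {σ τ : ℝ} (hσ : σ ∈ I) (hτ : τ ∈ I) :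
    F (w τ) = F (w σ) - (τ - σ) • b := by
  have hderiv : ∀ ρ ∈ I, HasDerivWithinAt (F ∘ w) (-b) I ρ := by
    intro ρ hρ
    have hcancel : F' (w ρ) (Finv (w ρ) b) = b := DFunLike.congr_fun (hinv _ (hw.mapsTo hρ)) b
    simpa only [map_neg, hcancel] using
      (hF' _ (hw.mapsTo hρ)).comp_hasDerivWithinAt ρ (hw.hasDerivWithinAt ρ hρ) hw.mapsTo
  simpa only [Function.comp_apply, smul_neg, ← sub_eq_add_neg] using
    eq_add_smul_of_hasDerivWithinAt_const hI hderiv hσ hτ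

theorem norm_sub_le (hw : IsDavidenkoPath Finv b s I w) (hI : Convex ℝ I)
    (hm : ∀ u ∈ s, ‖Finv u‖ ≤ m) {σ τ : ℝ} (hσ : σ ∈ I) (hτ : τ ∈ I) :
    ‖w τ - w σ‖ ≤ m * ‖b‖ * |τ - σ| :=
  hI.norm_image_sub_le_of_norm_hasDerivWithin_le hw.hasDerivWithinAt
    (fun ρ hρ ↦ (norm_neg _).trans_le ((Finv (w ρ)).le_of_opNorm_le (hm _ (hw.mapsTo hρ)) b)) hσ hτ

theorem hasDerivAt_comp_newtonTime (hw : IsDavidenkoPath Finv b s I w) {t : ℝ}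
    (ht : I ∈ 𝓝 (newtonTime t)) :
    HasDerivAt (w ∘ newtonTime) (-Finv (w (newtonTime t)) (Real.exp (-t) • b)) t := by
  simpa only [map_smul, smul_neg] using
    ((hw.hasDerivWithinAt _ (mem_of_mem_nhds ht)).hasDerivAt ht).scomp t (hasDerivAt_newtonTime t)

end IsDavidenkoPath

theorem continuous_newton_method_general [CompleteSpace E] {u₀ : E} {R : ℝ} {K : ℝ≥0} (hR : 0 ≤ R)
    (hF' : ∀ u ∈ closedBall u₀ R, HasFDerivWithinAt F (F' u) (closedBall u₀ R) u)
    (hinv : ∀ u ∈ closedBall u₀ R, (F' u).comp (Finv u) = .id ℝ G)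
    (hFinv : LipschitzOnWith K Finv (closedBall u₀ R))
    (hm : ∀ u ∈ closedBall u₀ R, ‖Finv u‖ ≤ m) (hsmall : m * ‖F u₀‖ ≤ R) :
    ∃ u : ℝ → E, u 0 = u₀ ∧
      (∀ t ≥ (0 : ℝ), HasDerivAt u (-(Finv (u t) (F (u t)))) t) ∧
      (∀ t ≥ (0 : ℝ), u t ∈ closedBall u₀ R) ∧
      ∃ y : E, Tendsto u atTop (𝓝 y) ∧ F y = 0 ∧
        (∀ t ≥ (0 : ℝ), ‖F (u t)‖ ≤ ‖F u₀‖ * Real.exp (-t)) ∧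
        (∀ t ≥ (0 : ℝ), ‖u t - y‖ ≤ m * ‖F u₀‖ * Real.exp (-t)) := by
  -- Starting at `τ = -1` rather than `0` makes the derivative at `t = 0` two-sided.
  obtain ⟨w, hw₀, hw⟩ := exists_isDavidenkoPath hR hFinv hm hsmall
  have hI : Convex ℝ (Icc (-1 : ℝ) 1) := convex_Icc _ _
  have one_mem : (1 : ℝ) ∈ Icc (-1 : ℝ) 1 := by simp
  have time_mem {t : ℝ} (ht : 0 ≤ t) : newtonTime t ∈ Ioo (-1 : ℝ) 1 :=
    Ico_subset_Ioo_left neg_one_lt_zero (newtonTime_mem_Ico ht)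
  have residual {τ : ℝ} (hτ : τ ∈ Icc (-1 : ℝ) 1) : F (w τ) = (1 - τ) • F u₀ := by
    simpa only [hw₀, sub_zero, sub_smul, one_smul] using
      hw.map_eq_sub_smul hI hF' hinv (σ := 0) (by simp) hτ
  have residual_flow {t : ℝ} (ht : 0 ≤ t) : F (w (newtonTime t)) = Real.exp (-t) • F u₀ := by
    rw [residual (Ioo_subset_Icc_self (time_mem ht)), one_sub_newtonTime]
  have dist_endpoint : ∀ t ≥ 0, ‖w (newtonTime t) - w 1‖ ≤ m * ‖F u₀‖ * Real.exp (-t) := by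
    intro t ht
    simpa only [abs_sub_comm _ (1 : ℝ), one_sub_newtonTime, Real.abs_exp] using
      hw.norm_sub_le hI hm one_mem (Ioo_subset_Icc_self (time_mem ht))
  refine ⟨w ∘ newtonTime, by simp only [Function.comp_apply, newtonTime_zero, hw₀],
    fun t ht ↦ ?_, fun t ht ↦ hw.mapsTo (Ioo_subset_Icc_self (time_mem ht)), w 1,
    tendsto_of_norm_sub_le_mul_exp_neg dist_endpoint, ?_, fun t ht ↦ ?_, dist_endpoint⟩
  · simpa only [Function.comp_apply, residual_flow ht] using
      hw.hasDerivAt_comp_newtonTime (Icc_mem_nhds (time_mem ht).1 (time_mem ht).2)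
  · rw [residual one_mem, sub_self, zero_smul]
  · rw [Function.comp_apply, residual_flow ht, norm_smul, Real.norm_eq_abs, Real.abs_exp, mul_comm]

end Davidenko

/-- **Example 1: continuous Newton-type method.** If `‖[F′(u)]⁻¹‖ ≤ m₁` on `B`,
`‖F″(u)‖ ≤ M₂` on `B`, and `m₁‖F(u₀)‖ ≤ R`, then `u̇ = −[F′(u)]⁻¹F(u)`,
`u(0) = u₀` has a global solution in `B` converging to a zero `y` of `F`, with
`‖F(u(t))‖ ≤ ‖F(u₀)‖e^{−t}` and `‖u(t) − y‖ ≤ m₁‖F(u₀)‖e^{−t}`. -/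
theorem continuous_newton_method
    {H : Type*} [NormedAddCommGroup H] [InnerProductSpace ℝ H] [CompleteSpace H]
    (F : H → H) (F' : H → H →L[ℝ] H) (F'' : H → H →L[ℝ] H →L[ℝ] H)
    (hF' : ∀ u : H, HasFDerivAt F (F' u) u)
    (hF'' : ∀ u : H, HasFDerivAt F' (F'' u) u)
    (u₀ : H) (R M₂ m₁ : ℝ) (hR : 0 < R)
    (B : Set H) (hB : B = {u : H | ‖u - u₀‖ ≤ R})
    (hM₂ : ∀ u ∈ B, ‖F'' u‖ ≤ M₂)
    (Finv : H → H →L[ℝ] H)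
    (hinv₁ : ∀ u ∈ B, (F' u).comp (Finv u) = ContinuousLinearMap.id ℝ H)
    (hinv₂ : ∀ u ∈ B, (Finv u).comp (F' u) = ContinuousLinearMap.id ℝ H)
    (hm₁ : ∀ u ∈ B, ‖Finv u‖ ≤ m₁)
    (hsmall : m₁ * ‖F u₀‖ ≤ R) :
    ∃ u : ℝ → H, u 0 = u₀ ∧
      (∀ t ≥ (0:ℝ), HasDerivAt u (-(Finv (u t) (F (u t)))) t) ∧
      (∀ t ≥ (0:ℝ), u t ∈ B) ∧
      ∃ y : H, Tendsto u atTop (nhds y) ∧ F y = 0 ∧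
        (∀ t ≥ (0:ℝ), ‖F (u t)‖ ≤ ‖F u₀‖ * Real.exp (-t)) ∧
        (∀ t ≥ (0:ℝ), ‖u t - y‖ ≤ m₁ * ‖F u₀‖ * Real.exp (-t)) := by
  obtain rfl : B = closedBall u₀ R := hB.trans (Set.ext fun _ ↦ mem_closedBall_iff_norm.symm)
  have hF'_lipschitz : LipschitzOnWith M₂.toNNReal F' (closedBall u₀ R) :=
    (convex_closedBall u₀ R).lipschitzOnWith_of_nnnorm_hasFDerivWithin_le
      (fun u _ ↦ (hF'' u).hasFDerivWithinAt) fun u hu ↦ NNReal.le_toNNReal_of_coe_le (hM₂ u hu)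
  have hFinv_lipschitz := lipschitzOnWith_inverse hF'_lipschitz hinv₁ hinv₂
    fun u hu ↦ NNReal.le_toNNReal_of_coe_le (hm₁ u hu)
  exact continuous_newton_method_general hR.le (fun u _ ↦ (hF' u).hasFDerivWithinAt) hinv₁
    hFinv_lipschitz hm₁ hsmall
end
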